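/- arXiv:1511.04598 — 2 statements merged into one kernel-verified Lean document; each statement's English description precedes it below -/
import Mathlib

section
/- (Aronszajn) The tree property fails at ℵ₁: there exists an ℵ₁-Aronszajn tree, i.e., a tree of height ω₁ all of whose levels are countable (cardinality < ℵ₁) and which has no chain of order type ω₁ (no cofinal branch). -/
open Cardinal Ordinal

/-- A tree: a partial order in which the set of strict predecessors of every element
is well-ordered by `<`. -/
structure IsTree (T : Type*) [PartialOrder T] : Prop where
  wo : ∀ t : T, IsWellOrder {s : T // s < t} (fun a b => (a : T) < (b : T))

/-- The height of an element `t` of a tree: the order type of its set of strict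
predecessors. -/
noncomputable def treeHeight {T : Type*} [PartialOrder T] (h : IsTree T) (t : T) : Ordinal :=
  @Ordinal.type {s : T // s < t} (fun a b => (a : T) < (b : T)) (h.wo t)

/-- The `α`-th level of a tree: the set of its elements of height `α`. -/
def treeLevel {T : Type*} [PartialOrder T] (h : IsTree T) (α : Ordinal) : Set T :=
  {t : T | treeHeight h t = α}

/-- A `κ`-tree: a tree of height `κ` (levels are nonempty exactly for the ordinals
below `κ`) all of whose levels have cardinality `< κ`. -/
structure IsKappaTree {T : Type*} [PartialOrder T] (κ : Cardinal) (h : IsTree T) : Prop where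
  height_lt : ∀ t : T, treeHeight h t < κ.ord
  levels_nonempty : ∀ α : Ordinal, α < κ.ord → (treeLevel h α).Nonempty
  levels_small : ∀ α : Ordinal, #(treeLevel h α) < κ

/-- A cofinal branch of a `κ`-tree: a chain meeting every level below `κ`. -/
def IsCofinalBranch {T : Type*} [PartialOrder T] (h : IsTree T) (κ : Cardinal)
    (B : Set T) : Prop :=
  IsChain (· < ·) B ∧ ∀ α : Ordinal, α < κ.ord → ∃ t ∈ B, treeHeight h t = α

/-!
Walk from `b` down to `c < b` by always moving to the element of `[c, b)` that comes first in a
fixed enumeration of the elements below `b`, and let `e b c` be the largest index met on the way.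
Each `e b` is finite-to-one on the elements below `b`, and `e a`, `e b` differ at only finitely many
points below `a ≤ b`. The finite modifications of the functions `e b`, ordered by extension, form
the tree: coherence makes it closed under restriction and its levels countable. The union of a
cofinal branch would be a function `g : ω₁ → ℕ` that is finite-to-one on every proper initial
segment; but then each set `{c | g c ≤ k}` would be countable, its proper initial segments being
finite, and hence so would `ω₁`.
-/

open Set Filter

section CofiniteBelow

section Preorder

variable {W : Type*} [Preorder W]

/-- The filter of sets containing all but finitely many of the elements below `b`. Finite-to-one
functions on `Iio b` are those tending to infinity along it, and functions agree along it if they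
agree at all but finitely many points of `Iio b`. -/
def cofiniteBelow (b : W) : Filter W :=
  cofinite ⊓ 𝓟 (Iio b)

theorem eventually_cofiniteBelow {b : W} {p : W → Prop} :
    (∀ᶠ c in cofiniteBelow b, p c) ↔ ∀ᶠ c in cofinite, c < b → p c :=
  eventually_inf_principal

theorem eventually_cofiniteBelow_lt (b : W) : ∀ᶠ c in cofiniteBelow b, c < b :=
  eventually_cofiniteBelow.2 (Eventually.of_forall fun _ => id)

theorem cofiniteBelow_mono : Monotone (cofiniteBelow (W := W)) :=
  fun _ _ hab => inf_le_inf_left _ (principal_mono.2 (Iio_subset_Iio hab))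

theorem tendsto_cofiniteBelow_atTop {b : W} {f : W → ℕ} :
    Tendsto f (cofiniteBelow b) atTop ↔ ∀ k, {c | c < b ∧ f c ≤ k}.Finite := by
  simp only [tendsto_atTop, eventually_cofiniteBelow, eventually_cofinite, Classical.not_imp,
    not_le]
  exact ⟨fun h k => (h (k + 1)).subset fun c hc => ⟨hc.1, Nat.lt_succ_of_le hc.2⟩,
    fun h k => (h k).subset fun c hc => ⟨hc.1, hc.2.le⟩⟩

theorem exists_tendsto_cofiniteBelow_atTop {b : W} (hb : (Iio b).Countable) :
    ∃ f : W → ℕ, Tendsto f (cofiniteBelow b) atTop := by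
  obtain ⟨f, hf⟩ := countable_iff_exists_injOn.1 hb
  refine ⟨f, tendsto_cofiniteBelow_atTop.2 fun k => ?_⟩
  exact Finite.of_finite_image ((finite_Iic k).subset (image_subset_iff.2 fun _ hc => hc.2))
    (hf.mono fun _ hc => hc.1)

end Preorder

theorem eventually_cofiniteBelow_forall_of_le {W : Type*} [PartialOrder W] {b : W} {f : W → ℕ}
    (hf : Tendsto f (cofiniteBelow b) atTop) {p : W → W → Prop}
    (hp : ∀ x < b, ∀ᶠ c in cofiniteBelow x, p x c) (n : ℕ) :
    ∀ᶠ c in cofiniteBelow b, ∀ x ∈ Ico c b, f x ≤ n → c < x ∧ p x c := by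
  have hforall : ∀ᶠ c in cofinite, ∀ x ∈ {x | x < b ∧ f x ≤ n}, c ≠ x ∧ (c < x → p x c) :=
    (eventually_all_finite (tendsto_cofiniteBelow_atTop.1 hf n)).2 fun x hx =>
      (eventually_cofinite_ne x).and (eventually_cofiniteBelow.1 (hp x hx.1))
  filter_upwards [hforall.filter_mono inf_le_left] with c hc x hx hfx
  obtain ⟨hne, hpx⟩ := hc x ⟨hx.2, hfx⟩
  have hlt : c < x := hx.1.lt_of_ne hne
  exact ⟨hlt, hpx hlt⟩

theorem countable_of_forall_finite_inter_Iio {W : Type*} [LinearOrder W] {s : Set W}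
    (hs : ∀ b ∈ s, (s ∩ Iio b).Finite) : s.Countable := by
  have hmono : StrictMonoOn (fun b => (s ∩ Iio b).ncard) s := fun a ha b hb hab =>
    ncard_lt_ncard ⟨inter_subset_inter_right s (Iio_subset_Iio hab.le),
      fun hsub => lt_irrefl a (hsub ⟨ha, hab⟩).2⟩ (hs b hb)
  exact countable_iff_exists_injOn.2 ⟨_, hmono.injOn⟩

theorem countable_of_forall_tendsto_cofiniteBelow {W : Type*} [LinearOrder W] {g : W → ℕ}
    (hg : ∀ b, Tendsto g (cofiniteBelow b) atTop) : Countable W := by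
  have hk (k : ℕ) : {c | g c ≤ k}.Countable :=
    countable_of_forall_finite_inter_Iio fun b _ =>
      (tendsto_cofiniteBelow_atTop.1 (hg b) k).subset fun _ hc => ⟨hc.2, hc.1⟩
  refine countable_univ_iff.1 ((countable_iUnion hk).mono fun c _ => ?_)
  exact mem_iUnion.2 ⟨g c, le_refl (g c)⟩

end CofiniteBelow

/-- A coherent family of finite-to-one functions `e b : Iio b → ℕ`. Each `e b` is encoded as a
function on all of `W`, whose values outside `Iio b` are irrelevant. -/
structure IsCoherent {W : Type*} [Preorder W] (e : W → W → ℕ) : Prop where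
  tendsto_atTop : ∀ b, Tendsto (e b) (cofiniteBelow b) atTop
  eventuallyEq : ∀ ⦃a b⦄, a ≤ b → e a =ᶠ[cofiniteBelow a] e b

section Walk

variable {W : Type*} [LinearOrder W]

/-- The first step of the walk from `b` down to `c`: the element of `[c, b)` at which the
enumeration `ν b` is smallest. -/
noncomputable def walkNext (ν : W → W → ℕ) {b c : W} (h : c < b) : W :=
  Function.argminOn (ν b) (Ico c b) ⟨c, left_mem_Ico.2 h⟩

theorem walkNext_mem_Ico (ν : W → W → ℕ) {b c : W} (h : c < b) : walkNext ν h ∈ Ico c b :=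
  Function.argminOn_mem _ _ _

theorem walkNext_le (ν : W → W → ℕ) {a b c : W} (h : c < b) (ha : a ∈ Ico c b) :
    ν b (walkNext ν h) ≤ ν b a :=
  Function.argminOn_le _ _ ha

/-- The maximal weight of a walk, the analogue of Todorcevic's function `ρ₁`: the largest value
`ν x y` over the steps `x ↦ y` of the walk from `b` down to `c`, and `0` if `b ≤ c`. -/
noncomputable def walkMax [WellFoundedLT W] (ν : W → W → ℕ) (b c : W) : ℕ :=
  if h : c < b then max (ν b (walkNext ν h)) (walkMax ν (walkNext ν h) c) else 0
termination_by wellFounded_lt.wrap b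
decreasing_by exact (walkNext_mem_Ico ν h).2

theorem walkMax_of_lt [WellFoundedLT W] (ν : W → W → ℕ) {b c : W} (h : c < b) :
    walkMax ν b c = max (ν b (walkNext ν h)) (walkMax ν (walkNext ν h) c) := by
  rw [walkMax, dif_pos h]

variable [WellFoundedLT W] {ν : W → W → ℕ} (hν : ∀ b, Tendsto (ν b) (cofiniteBelow b) atTop)
include hν

theorem tendsto_walkMax_atTop (b : W) : Tendsto (walkMax ν b) (cofiniteBelow b) atTop := by
  induction b using WellFoundedLT.induction with
  | ind b ih =>
  refine tendsto_atTop.2 fun k => ?_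
  filter_upwards [eventually_cofiniteBelow_lt b, eventually_cofiniteBelow_forall_of_le (hν b)
    (fun x hx => (ih x hx).eventually_ge_atTop k) k] with c hcb hc
  rw [walkMax_of_lt ν hcb, le_max_iff]
  rcases le_total k (ν b (walkNext ν hcb)) with hk | hk
  · exact Or.inl hk
  · exact Or.inr (hc _ (walkNext_mem_Ico ν hcb) hk).2

theorem walkMax_eventuallyEq {a b : W} (hab : a ≤ b) :
    walkMax ν a =ᶠ[cofiniteBelow a] walkMax ν b := by
  induction b using WellFoundedLT.induction generalizing a with
  | ind b ih =>
  rcases hab.eq_or_lt with rfl | hab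
  · rfl
  have hagree (x : W) (hx : x < b) :
      ∀ᶠ c in cofiniteBelow x, c < a → walkMax ν a c = walkMax ν x c := by
    rcases le_total x a with hxa | hax
    · filter_upwards [ih a hab hxa] with c hc _ using hc.symm
    · exact (eventually_cofiniteBelow.1 (ih x hx hax)).filter_mono inf_le_left
  have hmax (x : W) (hx : x < b) :
      ∀ᶠ c in cofiniteBelow x, c < a → walkMax ν a c = max (ν b x) (walkMax ν x c) := by
    filter_upwards [hagree x hx, (tendsto_walkMax_atTop hν x).eventually_ge_atTop (ν b x)]
      with c hc hle hca
    rw [max_eq_right hle, hc hca]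
  -- Below `a` the first step of the walk from `b` has index at most `ν b a`, so only finitely many
  -- first steps occur.
  filter_upwards [eventually_cofiniteBelow_lt a, cofiniteBelow_mono hab.le
    (eventually_cofiniteBelow_forall_of_le (hν b) hmax (ν b a))] with c hca hc
  have hcb : c < b := hca.trans hab
  rw [walkMax_of_lt ν hcb]
  exact (hc _ (walkNext_mem_Ico ν hcb) (walkNext_le ν hcb ⟨hca.le, hab⟩)).2 hca

end Walk

theorem exists_isCoherent {W : Type*} [LinearOrder W] [WellFoundedLT W]
    (hW : ∀ b : W, (Iio b).Countable) : ∃ e : W → W → ℕ, IsCoherent e := by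
  choose ν hν using fun b => exists_tendsto_cofiniteBelow_atTop (hW b)
  exact ⟨walkMax ν, tendsto_walkMax_atTop hν, fun _ _ => walkMax_eventuallyEq hν⟩

theorem countable_setOf_finite_ne {ι α : Type*} [Countable α] {s : Set ι} (hs : s.Countable)
    (g : ι → α) : {f : ι → α | {i | f i ≠ g i}.Finite ∧ {i | f i ≠ g i} ⊆ s}.Countable := by
  classical
  have hcover : {f : ι → α | {i | f i ≠ g i}.Finite ∧ {i | f i ≠ g i} ⊆ s} ⊆
      ⋃ t ∈ {t : Set ι | t.Finite ∧ t ⊆ s},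
        range fun (v : t → α) i => if h : i ∈ t then v ⟨i, h⟩ else g i := by
    intro f hf
    refine mem_biUnion hf ⟨fun i => f i, funext fun i => ?_⟩
    by_cases h : f i = g i
    · simp [h]
    · exact dif_pos h
  refine (Countable.biUnion (countable_ofPred_finite_subset hs) fun t ht => ?_).mono hcover
  have : Finite t := ht.1
  exact countable_range _

/-- A node of the tree attached to a coherent family `e`: a function `Iio dom → ℕ` differing from
`e dom` at finitely many points. It is encoded by its extension by zero to all of `W`. -/
@[ext]
structure CoherentNode {W : Type*} [Preorder W] (e : W → W → ℕ) where
  dom : W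
  val : W → ℕ
  val_eq_zero : ∀ c ∉ Iio dom, val c = 0
  eventuallyEq : val =ᶠ[cofiniteBelow dom] e dom

namespace CoherentNode

section Order

variable {W : Type*} [PartialOrder W] {e : W → W → ℕ} {s t : CoherentNode e}

theorem ext_of_eqOn (hdom : s.dom = t.dom) (hval : EqOn s.val t.val (Iio s.dom)) : s = t := by
  refine CoherentNode.ext hdom (funext fun c => ?_)
  by_cases hc : c ∈ Iio s.dom
  · exact hval hc
  · rw [s.val_eq_zero c hc, t.val_eq_zero c (hdom ▸ hc)]

instance : PartialOrder (CoherentNode e) where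
  le s t := s.dom ≤ t.dom ∧ EqOn s.val t.val (Iio s.dom)
  le_refl s := ⟨le_rfl, eqOn_refl _ _⟩
  le_trans _ _ _ hst htu :=
    ⟨hst.1.trans htu.1, hst.2.trans (htu.2.mono (Iio_subset_Iio hst.1))⟩
  le_antisymm _ _ hst hts := ext_of_eqOn (hst.1.antisymm hts.1) hst.2

theorem lt_iff : s < t ↔ s.dom < t.dom ∧ EqOn s.val t.val (Iio s.dom) := by
  constructor
  · intro h
    exact ⟨h.le.1.lt_of_ne fun hdom => h.ne (ext_of_eqOn hdom h.le.2), h.le.2⟩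
  · rintro ⟨hdom, hval⟩
    exact lt_of_le_of_ne ⟨hdom.le, hval⟩ fun h => hdom.ne (congrArg dom h)

/-- The node of length `a` obtained by truncating a function `f` to `Iio a`. -/
noncomputable def truncate (a : W) (f : W → ℕ) (hf : f =ᶠ[cofiniteBelow a] e a) :
    CoherentNode e where
  dom := a
  val := (Iio a).indicator f
  val_eq_zero _ hc := indicator_of_notMem hc f
  eventuallyEq := by
    filter_upwards [hf, eventually_cofiniteBelow_lt a] with c hc hca
    rw [indicator_of_mem (mem_Iio.2 hca), hc]

theorem truncate_lt {a : W} (hf : t.val =ᶠ[cofiniteBelow a] e a) (ha : a < t.dom) :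
    truncate a t.val hf < t :=
  lt_iff.2 ⟨ha, eqOn_indicator⟩

theorem eq_truncate_of_lt (hf : t.val =ᶠ[cofiniteBelow s.dom] e s.dom) (h : s < t) :
    s = truncate s.dom t.val hf :=
  ext_of_eqOn rfl ((lt_iff.1 h).2.trans eqOn_indicator.symm)

theorem lt_of_dom_lt_of_lt {u : CoherentNode e} (hs : s < u) (ht : t < u) (h : s.dom < t.dom) :
    s < t :=
  lt_iff.2 ⟨h, (lt_iff.1 hs).2.trans ((lt_iff.1 ht).2.mono (Iio_subset_Iio h.le)).symm⟩

theorem val_eventuallyEq_of_le (he : IsCoherent e) {a : W} (ha : a ≤ t.dom) :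
    t.val =ᶠ[cofiniteBelow a] e a :=
  (t.eventuallyEq.filter_mono (cofiniteBelow_mono ha)).trans (he.eventuallyEq ha).symm

/-- The predecessors of a node `t` are its truncations to the elements below `t.dom`. -/
noncomputable def predIso (he : IsCoherent e) (t : CoherentNode e) :
    (fun a b : {s : CoherentNode e // s < t} => (a : CoherentNode e) < (b : CoherentNode e)) ≃r
      (fun a b : Iio t.dom => a < b) where
  toFun s := ⟨s.1.dom, (lt_iff.1 s.2).1⟩
  invFun a :=
    ⟨truncate a t.val (val_eventuallyEq_of_le he (le_of_lt a.2)), truncate_lt _ a.2⟩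
  left_inv s := Subtype.ext
    (eq_truncate_of_lt (val_eventuallyEq_of_le he (lt_iff.1 s.2).1.le) s.2).symm
  right_inv _ := rfl
  map_rel_iff' {a b} := ⟨lt_of_dom_lt_of_lt a.2 b.2, fun h => (lt_iff.1 h).1⟩

theorem exists_eqOn_of_isChain {B : Set (CoherentNode e)} (hB : IsChain (· < ·) B) :
    ∃ g : W → ℕ, ∀ t ∈ B, EqOn g t.val (Iio t.dom) := by
  have hagree {s t : CoherentNode e} (hs : s ∈ B) (ht : t ∈ B) {c : W} (hcs : c < s.dom)
      (hct : c < t.dom) : s.val c = t.val c := by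
    rcases eq_or_ne s t with rfl | hne
    · rfl
    rcases (hB hs ht hne).imp le_of_lt le_of_lt with h | h
    · exact h.2 hcs
    · exact (h.2 hct).symm
  have hvalue (c : W) : ∃ n, ∀ t ∈ B, c < t.dom → t.val c = n := by
    by_cases h : ∃ s ∈ B, c < s.dom
    · obtain ⟨s, hs, hcs⟩ := h
      exact ⟨s.val c, fun t ht hct => hagree ht hs hct hcs⟩
    · exact ⟨0, fun t ht hct => absurd ⟨t, ht, hct⟩ h⟩
  choose g hg using hvalue
  exact ⟨g, fun t ht c hc => (hg c t ht hc).symm⟩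

theorem countable_setOf_dom_eq {a : W} (ha : (Iio a).Countable) :
    {t : CoherentNode e | t.dom = a}.Countable := by
  refine MapsTo.countable_of_injOn (f := val) (fun t ht => ?_) (fun s hs t ht hst => ?_)
    (countable_setOf_finite_ne ha ((Iio a).indicator (e a)))
  · obtain rfl : t.dom = a := ht
    have hsub : {c | t.val c ≠ (Iio t.dom).indicator (e t.dom) c} ⊆ Iio t.dom := fun c hc =>
      by_contra fun hct => hc ((t.val_eq_zero c hct).trans (indicator_of_notMem hct _).symm)
    refine ⟨(eventually_cofinite.1 (eventually_cofiniteBelow.1 t.eventuallyEq)).subset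
      fun c hc h => hc ?_, hsub⟩
    rw [indicator_of_mem (hsub hc), h (hsub hc)]
  · exact CoherentNode.ext (hs.trans ht.symm) hst

end Order

section Tree

variable {W : Type*} [LinearOrder W] [WellFoundedLT W] {e : W → W → ℕ} (he : IsCoherent e)
include he

theorem isTree : IsTree (CoherentNode e) :=
  ⟨fun t => (predIso he t).toRelEmbedding.isWellOrder⟩

theorem treeHeight_eq_typein (t : CoherentNode e) :
    treeHeight (isTree he) t = typein (α := W) (· < ·) t.dom := by
  have := (isTree he).wo t
  exact (predIso he t).ordinalType_congr

theorem treeHeight_eq_typein_iff {t : CoherentNode e} {a : W} :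
    treeHeight (isTree he) t = typein (α := W) (· < ·) a ↔ t.dom = a := by
  rw [treeHeight_eq_typein he, typein_inj]

theorem isKappaTree [Nonempty W] {κ : Cardinal} (hW : typeLT W = κ.ord)
    (hsmall : ∀ a, #{t : CoherentNode e | t.dom = a} < κ) : IsKappaTree κ (isTree he) where
  height_lt t := by
    rw [treeHeight_eq_typein he, ← hW]
    exact typein_lt_type _ _
  levels_nonempty α hα := by
    obtain ⟨a, rfl⟩ := typein_surj (α := W) (· < ·) (hα.trans_eq hW.symm)
    exact ⟨truncate a (e a) .rfl, treeHeight_eq_typein he _⟩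
  levels_small α := by
    rcases (treeLevel (isTree he) α).eq_empty_or_nonempty with hempty | ⟨t, rfl⟩
    · rw [hempty, mk_eq_zero]
      exact zero_le.trans_lt (hsmall (Classical.arbitrary W))
    · refine (mk_le_mk_of_subset fun s hs => ?_).trans_lt (hsmall t.dom)
      exact (treeHeight_eq_typein_iff he).1 (hs.trans (treeHeight_eq_typein he t))

theorem countable_of_isCofinalBranch {κ : Cardinal} (hW : typeLT W = κ.ord)
    {B : Set (CoherentNode e)} (hB : IsCofinalBranch (isTree he) κ B) : Countable W := by
  obtain ⟨g, hg⟩ := exists_eqOn_of_isChain hB.1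
  refine countable_of_forall_tendsto_cofiniteBelow (g := g) fun b => ?_
  obtain ⟨t, htB, ht⟩ := hB.2 _ ((typein_lt_type (α := W) (· < ·) b).trans_eq hW)
  obtain rfl : t.dom = b := (treeHeight_eq_typein_iff he).1 ht
  have hgt : g =ᶠ[cofiniteBelow t.dom] t.val :=
    (eventually_cofiniteBelow_lt t.dom).mono fun c hc => hg t htB hc
  exact (he.tendsto_atTop t.dom).congr' (hgt.trans t.eventuallyEq).symm

end Tree

end CoherentNode

/-- (Aronszajn) The tree property fails at `ℵ₁`: there exists an `ℵ₁`-Aronszajn tree,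
i.e. a tree of height `ω₁` all of whose levels are countable (of cardinality `< ℵ₁`)
with no cofinal branch. -/
theorem exists_aleph1_aronszajn_tree :
    ∃ (T : Type) (inst : PartialOrder T) (h : @IsTree T inst),
      @IsKappaTree T inst (aleph 1) h ∧
      ∀ B : Set T, ¬ @IsCofinalBranch T inst h (aleph 1) B := by
  let W : Type := (aleph 1).ord.ToType
  have hW : typeLT W = (aleph 1).ord := type_toType _
  have hcard : #W = aleph 1 := mk_ord_toType _
  have hcountable {α : Type} (s : Set α) : s.Countable ↔ #s < aleph 1 := by
    rw [lt_aleph_one_iff, le_aleph0_iff_set_countable]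
  have hIio (b : W) : (Iio b).Countable :=
    (hcountable _).2 ((mk_Iio_lt b (by rw [hcard, hW])).trans_eq hcard)
  have : Uncountable W := aleph0_lt_mk_iff.1 (aleph0_lt_aleph_one.trans_eq hcard.symm)
  obtain ⟨e, he⟩ := exists_isCoherent hIio
  refine ⟨CoherentNode e, inferInstance, CoherentNode.isTree he,
    CoherentNode.isKappaTree he hW fun a => ?_, fun B hB => ?_⟩
  · exact (hcountable _).1 (CoherentNode.countable_setOf_dom_eq (hIio a))
  · exact not_countable (CoherentNode.countable_of_isCofinalBranch he hW hB)
end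

section
/- (Specker) For every infinite cardinal κ, if κ^{<κ} = κ (i.e., the cardinality of the set of all sequences of elements of κ of length < κ equals κ), then the tree property fails at κ⁺: there exists a κ⁺-Aronszajn tree, i.e., a tree of height κ⁺ all of whose levels have cardinality < κ⁺ and which has no chain of order type κ⁺. -/
open Cardinal Ordinal

universe u

/-!
Let `I` and `K` be well-orders of types `κ⁺` and `κ`. There are functions `e a : Iio a → K` for
`a : I` which have fibers of size `< κ` and are coherent: for `b ≤ a`, the functions `e a` and `e b`
differ at fewer than `κ` points of `Iio b`. The value `e a ξ` is the largest index occurring in a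
walk from `a` down to `ξ` along enumerations of the initial segments in type `K`. Such an index is
at most `k` only if every step of the walk is among the first `k` points of an enumeration, and
regularity of `κ` makes a union over these points harmless.

The tree consists of the functions `Iio a → K` that differ from `e a` at fewer than `κ` points.
Coherence makes it closed under restriction, and `κ ^< κ = κ` bounds its levels by `κ`. A cofinal
branch would be a function `F : I → K` all of whose restrictions to initial segments have fibers of
size `< κ`. But `F` has a fiber of size `κ⁺`, and `κ` of its points lie below some `a`.
-/

namespace IsTree

variable {T : Type u} [PartialOrder T]

theorem subtype (h : IsTree T) (S : Set T) : IsTree S where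
  wo t :=
    let f : ((fun a b => (a : S) < b) : {s : S // s < t} → {s : S // s < t} → Prop) ↪r
        ((fun a b => (a : T) < b) : {s : T // s < t} → {s : T // s < t} → Prop) :=
      ⟨⟨fun s => ⟨s.1, s.2⟩, fun _ _ hab => Subtype.ext (Subtype.ext (Subtype.mk.inj hab))⟩,
        Iff.rfl⟩
    have := h.wo t
    f.isWellOrder

theorem treeHeight_subtype (h : IsTree T) {S : Set T} (hS : IsLowerSet S) (t : S) :
    treeHeight (h.subtype S) t = treeHeight h (t : T) := by
  have := h.wo t
  have := (h.subtype S).wo t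
  let f : ((fun a b => (a : S) < b) : {s : S // s < t} → {s : S // s < t} → Prop) ≃r
      ((fun a b => (a : T) < b) : {s : T // s < t} → {s : T // s < t} → Prop) :=
    { toFun s := ⟨s.1, s.2⟩
      invFun s := ⟨⟨s, hS s.2.le t.2⟩, s.2⟩
      left_inv _ := rfl
      right_inv _ := rfl
      map_rel_iff' := Iff.rfl }
  exact f.ordinalType_congr

end IsTree

namespace Specker

open Set Filter Order

section Cardinal

theorem isRegular_of_powerlt_self_le {κ : Cardinal.{u}} (hκ : ℵ₀ ≤ κ) (hpow : κ ^< κ ≤ κ) :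
    κ.IsRegular := by
  refine ⟨hκ, ?_⟩
  by_contra! hcof
  exact (lt_power_cof_ord hκ).not_ge ((le_powerlt κ hcof).trans hpow)

theorem mk_setOf_mk_lt_le (X : Type u) (κ : Cardinal.{u}) :
    #{s : Set X | #s < κ} ≤ κ * max #X ℵ₀ ^< κ := by
  let bounded : κ.ord.ToType → Set (Set X) := fun k => {s | #s ≤ #(Iio k)}
  have hcover : {s : Set X | #s < κ} ⊆ ⋃ k, bounded k := by
    intro s hs
    obtain ⟨k, hk⟩ := typein_surj (α := κ.ord.ToType) (· < ·) (o := (#s).ord)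
      (by rwa [type_toType, ord_lt_ord])
    have hcard : #s = #(Iio k) := by
      rw [← card_ord #s, ← hk]
      exact (card_typein k).symm
    exact mem_iUnion.2 ⟨k, hcard.le⟩
  have hbounded : ∀ k, #(bounded k) ≤ max #X ℵ₀ ^< κ := fun k =>
    (mk_bounded_set_le X _).trans
      (le_powerlt _ ((mk_Iio_lt k (by simp)).trans_eq (mk_ord_toType κ)))
  calc #{s : Set X | #s < κ} ≤ #(⋃ k, bounded k) := mk_le_mk_of_subset hcover
    _ ≤ #κ.ord.ToType * ⨆ k, #(bounded k) := mk_iUnion_le _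
    _ ≤ κ * max #X ℵ₀ ^< κ := by
      rw [mk_ord_toType]
      exact mul_le_mul_right (ciSup_le' hbounded) κ

theorem mk_setOf_mk_ne_lt_le {X Y : Type u} (g : X → Y) (κ : Cardinal.{u}) :
    #{f : X → Y | #{x | f x ≠ g x} < κ} ≤ #{s : Set (X × Y) | #s < κ} := by
  let graphDiff : (X → Y) → Set (X × Y) := fun f => (fun x => (x, f x)) '' {x | f x ≠ g x}
  have hmem : ∀ f x y, (x, y) ∈ graphDiff f ↔ f x = y ∧ y ≠ g x := by
    simp only [graphDiff, mem_image, Prod.mk.injEq]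
    grind
  have hsmall : ∀ f, #{x | f x ≠ g x} < κ → #(graphDiff f) < κ := fun f => mk_image_le.trans_lt
  clear_value graphDiff
  have hinj : Function.Injective graphDiff := by
    intro f f' hff'
    funext x
    have hiff : ∀ y, (f x = y ∧ y ≠ g x) ↔ (f' x = y ∧ y ≠ g x) := fun y => by
      rw [← hmem, ← hmem, hff']
    grind [hiff (f x), hiff (f' x)]
  refine mk_le_of_injective (f := fun f => ⟨graphDiff f, hsmall f f.2⟩) ?_
  exact fun f f' hff' => Subtype.ext (hinj (congrArg Subtype.val hff'))

theorem exists_subset_range_of_mk_le {X Y : Type u} [Nonempty X] {s : Set X} (h : #s ≤ #Y) :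
    ∃ f : Y → X, s ⊆ range f := by
  obtain ⟨g⟩ := h
  refine ⟨Function.extend g Subtype.val fun _ => Classical.arbitrary X, fun x hx => ?_⟩
  exact ⟨g ⟨x, hx⟩, g.injective.extend_apply _ _ _⟩

theorem mk_Iio_le_of_type_eq_succ_ord {I : Type u} [LinearOrder I] [WellFoundedLT I]
    {κ : Cardinal.{u}} (hI : typeLT I = (succ κ).ord) (a : I) : #(Iio a) ≤ κ := by
  have hmk : #I = succ κ := by rw [← card_type (α := I) (· < ·), hI, card_ord]
  exact lt_succ_iff.1 ((mk_Iio_lt a (by rw [hmk, hI])).trans_eq hmk)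

theorem exists_le_mk_lt_and_eq {I K : Type u} [LinearOrder I] {κ : Cardinal.{u}} (hκ : ℵ₀ ≤ κ)
    (hK : #K ≤ κ) (hI : κ < Order.cof I) (F : I → K) :
    ∃ a k, κ ≤ #{ξ | ξ < a ∧ F ξ = k} := by
  have hreg := isRegular_succ hκ
  obtain ⟨k, hk⟩ := infinite_pigeonhole_card F (succ κ)
    (succ_le_of_lt (hI.trans_le (cof_le_cardinalMk I))) hreg.aleph0_le
    (by rwa [hreg.cof_ord, lt_succ_iff])
  obtain ⟨S, hSF, hS⟩ := le_mk_iff_exists_subset.1 ((le_succ κ).trans hk)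
  have hS_not_cofinal : ¬ IsCofinal S := fun h => (hS ▸ hI).not_ge (cof_le h)
  obtain ⟨a, ha⟩ := not_isCofinal_iff.1 hS_not_cofinal
  exact ⟨a, k, hS.ge.trans (mk_le_mk_of_subset fun ξ hξ => ⟨ha ξ hξ, hSF hξ⟩)⟩

end Cardinal

section Walk

variable {I K : Type u} [LinearOrder I] [LinearOrder K] [WellFoundedLT K] [Nonempty K]

open Classical in
/-- Given `c a : K → I` enumerating `Iio a`, the walk from `a` down to `ξ` steps from `a` to the
first point `c a i` of the enumeration with `ξ ≤ c a i < a`, and repeats from there; `walkMax c a ξ`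
is the largest index `i` used. The value at `a ≤ ξ` is arbitrary. -/
noncomputable def walkMax [WellFoundedLT I] (c : I → K → I) (a ξ : I) : K :=
  if h : {i | ξ ≤ c a i ∧ c a i < a}.Nonempty then
    max (walkMax c (c a (wellFounded_lt.min _ h)) ξ) (wellFounded_lt.min _ h)
  else Classical.arbitrary K
termination_by wellFounded_lt.wrap a
decreasing_by exact (wellFounded_lt.min_mem _ h).2

variable [WellFoundedLT I] {c : I → K → I} {κ : Cardinal.{u}}

theorem exists_walkMax_eq {a ξ : I} (hc : Iio a ⊆ range (c a)) (hξ : ξ < a) :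
    ∃ i, IsLeast {i | ξ ≤ c a i ∧ c a i < a} i ∧
      walkMax c a ξ = max (walkMax c (c a i) ξ) i := by
  obtain ⟨i, hi⟩ := hc hξ
  have h : {i | ξ ≤ c a i ∧ c a i < a}.Nonempty := ⟨i, hi.ge, hi.trans_lt hξ⟩
  refine ⟨wellFounded_lt.min _ h, ⟨wellFounded_lt.min_mem _ h, fun j hj => ?_⟩, ?_⟩
  · exact wellFounded_lt.min_le hj
  · rw [walkMax, dif_pos h]

theorem eventually_lt_walkMax (hreg : κ.IsRegular) (hK : ∀ k : K, #(Iic k) < κ)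
    (hc : ∀ a, Iio a ⊆ range (c a)) (a : I) (k : K) :
    ∀ᶠ ξ in cocardinal I hreg, ξ < a → k < walkMax c a ξ := by
  induction a using WellFoundedLT.induction with
  | ind a ih =>
  have hstep : ∀ᶠ ξ in cocardinal I hreg, ∀ i ∈ Iic k,
      c a i < a → ξ ≤ c a i → k < walkMax c (c a i) ξ := by
    refine (eventually_cardinal_ball (hK k)).2 fun i _ => eventually_imp_distrib_left.2 fun hi => ?_
    filter_upwards [eventually_cocardinal_ne (c a i), ih _ hi] with ξ hne hlt hle
    exact hlt (hle.lt_of_ne hne)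
  filter_upwards [hstep] with ξ hstep hξ
  obtain ⟨i, ⟨⟨hle, hlt⟩, -⟩, heq⟩ := exists_walkMax_eq (hc a) hξ
  rw [heq, lt_max_iff]
  exact (le_or_gt i k).imp_left fun hik => hstep i hik hlt hle

theorem eventually_walkMax_eq (hreg : κ.IsRegular) (hK : ∀ k : K, #(Iic k) < κ)
    (hc : ∀ a, Iio a ⊆ range (c a)) {a b : I} (hba : b ≤ a) :
    ∀ᶠ ξ in cocardinal I hreg, ξ < b → walkMax c a ξ = walkMax c b ξ := by
  induction a using WellFoundedLT.induction generalizing b with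
  | ind a ih =>
  rcases hba.eq_or_lt with rfl | hba
  · exact .of_forall fun _ _ => rfl
  obtain ⟨j, hj⟩ := hc a hba
  have hcoherent : ∀ i, c a i < a → ∀ᶠ ξ in cocardinal I hreg,
      ξ < c a i → ξ < b → walkMax c (c a i) ξ = walkMax c b ξ := fun i hi => by
    rcases le_total b (c a i) with hle | hle
    · filter_upwards [ih _ hi hle] with ξ heq _ hξ using heq hξ
    · filter_upwards [ih _ hba hle] with ξ heq hξ _ using (heq hξ).symm
  have hstep : ∀ᶠ ξ in cocardinal I hreg, ∀ i ∈ Iic j, c a i < a → ξ ≤ c a i → ξ < b →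
      i < walkMax c (c a i) ξ ∧ walkMax c (c a i) ξ = walkMax c b ξ := by
    refine (eventually_cardinal_ball (hK j)).2 fun i _ => eventually_imp_distrib_left.2 fun hi => ?_
    filter_upwards [eventually_cocardinal_ne (c a i),
      eventually_lt_walkMax hreg hK hc (c a i) i, hcoherent i hi] with ξ hne hlt heq hle hξ
    exact ⟨hlt (hle.lt_of_ne hne), heq (hle.lt_of_ne hne) hξ⟩
  filter_upwards [hstep] with ξ hstep hξ
  obtain ⟨i, ⟨⟨hle, hlt⟩, hleast⟩, heq⟩ := exists_walkMax_eq (hc a) (hξ.trans hba)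
  have hij : i ≤ j := hleast ⟨hξ.le.trans_eq hj.symm, hj.trans_lt hba⟩
  obtain ⟨hmax, heq'⟩ := hstep i hij hlt hle hξ
  rw [heq, max_eq_left hmax.le, heq']

theorem exists_coherent_family [Nonempty I] (hreg : κ.IsRegular) (hK : ∀ k : K, #(Iic k) < κ)
    (hI : ∀ a : I, #(Iio a) ≤ #K) :
    ∃ e : I → I → K, (∀ a k, ∀ᶠ ξ in cocardinal I hreg, ξ < a → k < e a ξ) ∧
      ∀ a b, b ≤ a → ∀ᶠ ξ in cocardinal I hreg, ξ < b → e a ξ = e b ξ := by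
  choose c hc using fun a => exists_subset_range_of_mk_le (hI a)
  exact ⟨walkMax c, eventually_lt_walkMax hreg hK hc,
    fun _ _ => eventually_walkMax_eq hreg hK hc⟩

end Walk

/-- A function to `K` from a proper initial segment `Iio top` of `I`. These are ordered by
extension: they are the nodes of the tree of all `K`-valued sequences of length less than `I`. -/
structure InitialFun (I K : Type u) [Preorder I] where
  top : I
  fn : Iio top → K

namespace InitialFun

variable {I K : Type u}

section Preorder

variable [Preorder I]

/-- The restriction of a sequence to a shorter initial segment. -/
def restrict (t : InitialFun I K) {b : I} (hb : b ≤ t.top) : InitialFun I K where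
  top := b
  fn ξ := t.fn ⟨ξ, ξ.2.trans_le hb⟩

/-- The restriction of a total function to the initial segment `Iio a`. -/
def ofFun (F : I → K) (a : I) : InitialFun I K where
  top := a
  fn ξ := F ξ

end Preorder

section PartialOrder

variable [PartialOrder I]

instance : PartialOrder (InitialFun I K) where
  le s t := ∃ (a : I) (h : a ≤ t.top), s = t.restrict h
  le_refl t := ⟨t.top, le_rfl, rfl⟩
  le_trans := by
    rintro _ _ t ⟨a, hab, rfl⟩ ⟨b, hbt, rfl⟩
    exact ⟨a, hab.trans hbt, rfl⟩
  le_antisymm := by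
    rintro s t ⟨a, hat, rfl⟩ ⟨b, hba, hb⟩
    obtain rfl : t.top = b := congrArg top hb
    obtain rfl := hat.antisymm hba
    rfl

theorem restrict_lt (t : InitialFun I K) {a : I} (ha : a < t.top) : t.restrict ha.le < t := by
  refine lt_of_le_of_ne ⟨a, ha.le, rfl⟩ fun h => ?_
  exact ha.ne (congrArg top h)

theorem lt_iff {s t : InitialFun I K} :
    s < t ↔ ∃ (a : I) (h : a < t.top), s = t.restrict h.le := by
  constructor
  · intro hst
    obtain ⟨a, ha, rfl⟩ := hst.le
    refine ⟨a, ha.lt_of_ne ?_, rfl⟩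
    rintro rfl
    exact hst.ne rfl
  · rintro ⟨a, ha, rfl⟩
    exact t.restrict_lt ha

theorem top_lt_top {s t : InitialFun I K} (h : s < t) : s.top < t.top := by
  obtain ⟨_, ha, rfl⟩ := lt_iff.1 h
  exact ha

theorem exists_forall_ofFun_eq_of_isChain [Nonempty K] {B : Set (InitialFun I K)}
    (hB : IsChain (· ≤ ·) B) : ∃ F : I → K, ∀ t ∈ B, ofFun F t.top = t := by
  have hagree : ∀ ξ, ∃ k, ∀ t ∈ B, ∀ h : ξ < t.top, t.fn ⟨ξ, h⟩ = k := by
    intro ξ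
    by_cases h : ∃ s ∈ B, ξ < s.top
    · obtain ⟨s, hs, hξ⟩ := h
      refine ⟨s.fn ⟨ξ, hξ⟩, fun t ht _ => ?_⟩
      rcases hB.total hs ht with ⟨_, _, rfl⟩ | ⟨_, _, rfl⟩ <;> rfl
    · exact ⟨Classical.arbitrary K, fun t ht hξ => (h ⟨t, ht, hξ⟩).elim⟩
  choose F hF using hagree
  refine ⟨F, fun t ht => congrArg (mk t.top) (funext fun ξ => ?_)⟩
  exact (hF ξ t ht ξ.2).symm

end PartialOrder

section LinearOrder

variable [LinearOrder I]

/-- The predecessors of a sequence are its restrictions to shorter initial segments. -/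
def predRelIso (t : InitialFun I K) :
    ((fun a b => (a : InitialFun I K) < b) : {s // s < t} → {s // s < t} → Prop) ≃r
      ((· < ·) : Iio t.top → Iio t.top → Prop) where
  toFun s := ⟨s.1.top, top_lt_top s.2⟩
  invFun a := ⟨t.restrict a.2.le, t.restrict_lt a.2⟩
  left_inv := by
    rintro ⟨_, hs⟩
    obtain ⟨_, _, rfl⟩ := lt_iff.1 hs
    rfl
  right_inv _ := rfl
  map_rel_iff' := by
    rintro ⟨_, hs⟩ ⟨_, hr⟩
    obtain ⟨_, _, rfl⟩ := lt_iff.1 hs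
    obtain ⟨_, _, rfl⟩ := lt_iff.1 hr
    exact ⟨fun h => restrict_lt _ h, top_lt_top⟩

variable [WellFoundedLT I]

theorem isTree : IsTree (InitialFun I K) :=
  ⟨fun t => t.predRelIso.toRelEmbedding.isWellOrder⟩

theorem treeHeight_eq_typein (h : IsTree (InitialFun I K)) (t : InitialFun I K) :
    treeHeight h t = typein (α := I) (· < ·) t.top := by
  have := h.wo t
  rw [← type_Iio_lt]
  exact t.predRelIso.ordinalType_congr

variable {κ : Cardinal.{u}} {S : Set (InitialFun I K)}

theorem treeHeight_subtype_eq_typein (hS : IsLowerSet S) (t : S) :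
    treeHeight (isTree.subtype S) t = typein (α := I) (· < ·) t.1.top := by
  rw [isTree.treeHeight_subtype hS, treeHeight_eq_typein]

theorem mk_treeLevel_subtype_le (hS : IsLowerSet S) (a : I) :
    #(treeLevel (isTree.subtype S) (typein (α := I) (· < ·) a)) ≤ #{f | mk a f ∈ S} := by
  refine mk_le_of_surjective (f := fun f =>
    ⟨⟨mk a f, f.2⟩, treeHeight_subtype_eq_typein hS ⟨mk a f, f.2⟩⟩) ?_
  rintro ⟨⟨⟨b, f⟩, hf⟩, hb⟩
  obtain rfl : b = a :=
    typein_injective (α := I) (· < ·) ((treeHeight_subtype_eq_typein hS ⟨_, hf⟩).symm.trans hb)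
  exact ⟨⟨f, hf⟩, rfl⟩

theorem isKappaTree_subtype [Nonempty I] (hS : IsLowerSet S) (hI : typeLT I = κ.ord)
    (hne : ∀ a, ∃ f, mk a f ∈ S) (hsmall : ∀ a, #{f | mk a f ∈ S} < κ) :
    IsKappaTree κ (isTree.subtype S) where
  height_lt t := by
    rw [treeHeight_subtype_eq_typein hS, ← hI]
    exact typein_lt_type _ _
  levels_nonempty α hα := by
    obtain ⟨a, rfl⟩ := typein_surj (α := I) (· < ·) (hα.trans_eq hI.symm)
    obtain ⟨f, hf⟩ := hne a
    exact ⟨⟨mk a f, hf⟩, treeHeight_subtype_eq_typein hS _⟩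
  levels_small α := by
    rcases (treeLevel (isTree.subtype S) α).eq_empty_or_nonempty with h | ⟨t, rfl⟩
    · simpa [h] using (hsmall (Classical.arbitrary I)).pos
    · rw [treeHeight_subtype_eq_typein hS]
      exact (mk_treeLevel_subtype_le hS _).trans_lt (hsmall _)

theorem exists_forall_ofFun_mem_of_isCofinalBranch [Nonempty K] (hS : IsLowerSet S)
    (hI : typeLT I = κ.ord) {B : Set S} (hB : IsCofinalBranch (isTree.subtype S) κ B) :
    ∃ F : I → K, ∀ a, ofFun F a ∈ S := by
  obtain ⟨hchain, hcofinal⟩ := hB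
  have hchain' : IsChain (· ≤ ·) (Subtype.val '' B : Set (InitialFun I K)) :=
    hchain.image_of_map_rel (· < ·) (· ≤ ·) Subtype.val fun _ _ => le_of_lt
  obtain ⟨F, hF⟩ := exists_forall_ofFun_eq_of_isChain hchain'
  refine ⟨F, fun a => ?_⟩
  obtain ⟨t, htB, ht⟩ := hcofinal (typein (α := I) (· < ·) a) (hI ▸ typein_lt_type _ a)
  obtain rfl : t.1.top = a :=
    typein_injective (α := I) (· < ·) ((treeHeight_subtype_eq_typein hS t).symm.trans ht)
  rw [hF t ⟨t, htB, rfl⟩]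
  exact t.2

end LinearOrder

end InitialFun

section CoherentTree

variable {I K : Type u} [LinearOrder I] {κ : Cardinal.{u}}

/-- The sequences which differ from a member of the family `e` of functions `e a : Iio a → K` at
fewer than `κ` arguments. The values `e a ξ` for `a ≤ ξ` are irrelevant. -/
def coherentTree (hreg : κ.IsRegular) (e : I → I → K) : Set (InitialFun I K) :=
  {t | ∀ᶠ ξ in cocardinal I hreg, ∀ h : ξ < t.top, t.fn ⟨ξ, h⟩ = e t.top ξ}

variable {hreg : κ.IsRegular} {e : I → I → K}

theorem mem_coherentTree {t : InitialFun I K} : t ∈ coherentTree hreg e ↔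
    ∀ᶠ ξ in cocardinal I hreg, ∀ h : ξ < t.top, t.fn ⟨ξ, h⟩ = e t.top ξ :=
  Iff.rfl

theorem isLowerSet_coherentTree
    (he : ∀ a b, b ≤ a → ∀ᶠ ξ in cocardinal I hreg, ξ < b → e a ξ = e b ξ) :
    IsLowerSet (coherentTree hreg e) := by
  rintro t _ ⟨b, hle, rfl⟩ ht
  filter_upwards [ht, he _ _ hle] with ξ ht he hξ
  exact (ht (hξ.trans_le hle)).trans (he hξ)

theorem ofFun_mem_coherentTree (a : I) : .ofFun (e a) a ∈ coherentTree hreg e :=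
  mem_coherentTree.2 (.of_forall fun _ _ => rfl)

theorem mk_coherentTree_level_le (hpow : κ ^< κ ≤ κ) (hK : #K ≤ κ) {a : I} (ha : #(Iio a) ≤ κ) :
    #{f | .mk a f ∈ coherentTree hreg e} ≤ κ := by
  have hκ := hreg.aleph0_le
  have hX : max #(Iio a × K) ℵ₀ ≤ κ := by
    rw [mk_prod, Cardinal.lift_id, Cardinal.lift_id]
    exact max_le ((mul_le_mul' ha hK).trans_eq (mul_eq_self hκ)) hκ
  have hsub : {f | .mk a f ∈ coherentTree hreg e} ⊆
      {f : Iio a → K | #{x | f x ≠ e a x} < κ} := fun f hf => by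
    refine lt_of_le_of_lt ?_ (eventually_cocardinal.1 ((mem_coherentTree (hreg := hreg)).1 hf))
    rw [← mk_image_eq (s := {x | f x ≠ e a x}) Subtype.val_injective]
    refine mk_le_mk_of_subset ?_
    rintro _ ⟨x, hx, rfl⟩ h
    exact hx (h x.2)
  calc #{f | .mk a f ∈ coherentTree hreg e}
      ≤ #{f : Iio a → K | #{x | f x ≠ e a x} < κ} := mk_le_mk_of_subset hsub
    _ ≤ #{s : Set (Iio a × K) | #s < κ} := mk_setOf_mk_ne_lt_le _ κ
    _ ≤ κ * max #(Iio a × K) ℵ₀ ^< κ := mk_setOf_mk_lt_le _ κ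
    _ ≤ κ * κ ^< κ := mul_le_mul_right (powerlt_le.2 fun _ hx =>
        (power_le_power_right hX).trans (le_powerlt κ hx)) κ
    _ ≤ κ := (mul_le_mul_right hpow κ).trans_eq (mul_eq_self hκ)

theorem exists_ofFun_notMem_coherentTree (hK : #K ≤ κ) (hI : κ < Order.cof I)
    (hfiber : ∀ a k, ∀ᶠ ξ in cocardinal I hreg, ξ < a → e a ξ ≠ k) (F : I → K) :
    ∃ a, .ofFun F a ∉ coherentTree hreg e := by
  obtain ⟨a, k, hak⟩ := exists_le_mk_lt_and_eq hreg.aleph0_le hK hI F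
  refine ⟨a, fun hF => (frequently_cocardinal (hreg := hreg)).2 hak ?_⟩
  filter_upwards [mem_coherentTree.1 hF, hfiber a k] with ξ hF hne ⟨hξ, hk⟩
  exact hne hξ ((hF hξ).symm.trans hk)

variable [WellFoundedLT I]

theorem isKappaTree_coherentTree [Nonempty I] (hpow : κ ^< κ ≤ κ) (hK : #K ≤ κ)
    (hI : typeLT I = (succ κ).ord)
    (he : ∀ a b, b ≤ a → ∀ᶠ ξ in cocardinal I hreg, ξ < b → e a ξ = e b ξ) :
    IsKappaTree (succ κ) (InitialFun.isTree.subtype (coherentTree hreg e)) :=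
  InitialFun.isKappaTree_subtype (isLowerSet_coherentTree he) hI
    (fun a => ⟨_, ofFun_mem_coherentTree a⟩)
    fun a => lt_succ_iff.2
      (mk_coherentTree_level_le hpow hK (mk_Iio_le_of_type_eq_succ_ord hI a))

theorem not_isCofinalBranch_coherentTree [Nonempty K] (hK : #K ≤ κ)
    (hI : typeLT I = (succ κ).ord)
    (he : ∀ a b, b ≤ a → ∀ᶠ ξ in cocardinal I hreg, ξ < b → e a ξ = e b ξ)
    (hfiber : ∀ a k, ∀ᶠ ξ in cocardinal I hreg, ξ < a → e a ξ ≠ k) (B : Set (coherentTree hreg e)) :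
    ¬ IsCofinalBranch (InitialFun.isTree.subtype (coherentTree hreg e)) (succ κ) B := by
  intro hB
  obtain ⟨F, hF⟩ :=
    InitialFun.exists_forall_ofFun_mem_of_isCofinalBranch (isLowerSet_coherentTree he) hI hB
  have hcof : κ < Order.cof I := by
    rw [← cof_type, hI, (isRegular_succ hreg.aleph0_le).cof_ord]
    exact lt_succ κ
  obtain ⟨a, ha⟩ := exists_ofFun_notMem_coherentTree hK hcof hfiber F
  exact ha (hF a)

end CoherentTree

end Specker

open Specker

/-- (Specker) For every infinite cardinal `κ`, if `κ ^< κ = κ` then the tree property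
fails at `κ⁺`: there exists a `κ⁺`-Aronszajn tree, i.e. a tree of height `κ⁺` all of
whose levels have cardinality `< κ⁺` and which has no cofinal branch. -/
theorem specker_exists_succ_aronszajn_tree (κ : Cardinal.{u}) (hκ : ℵ₀ ≤ κ)
    (hpow : κ ^< κ = κ) :
    ∃ (T : Type u) (inst : PartialOrder T) (h : @IsTree T inst),
      @IsKappaTree T inst (Order.succ κ) h ∧
      ∀ B : Set T, ¬ @IsCofinalBranch T inst h (Order.succ κ) B := by
  have hreg := isRegular_of_powerlt_self_le hκ hpow.le
  let K := κ.ord.ToType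
  let I := (Order.succ κ).ord.ToType
  have hK : #K = κ := mk_ord_toType κ
  have hI : typeLT I = (Order.succ κ).ord := type_toType _
  have : Nonempty K := mk_ne_zero_iff.1 (hK.trans_ne hreg.ne_zero)
  have : Nonempty I := mk_ne_zero_iff.1 ((mk_ord_toType _).trans_ne (isRegular_succ hκ).ne_zero)
  obtain ⟨e, hlt, he⟩ := exists_coherent_family (I := I) (K := K) hreg
    (fun k => (mk_Iic_lt k (by simp [K]) (hκ.trans_eq hK.symm)).trans_eq hK)
    (fun a => (mk_Iio_le_of_type_eq_succ_ord hI a).trans_eq hK.symm)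
  have hfiber (a : I) (k : K) : ∀ᶠ ξ in Filter.cocardinal I hreg, ξ < a → e a ξ ≠ k :=
    (hlt a k).mono fun _ h hξ => (h hξ).ne'
  exact ⟨coherentTree hreg e, inferInstance, InitialFun.isTree.subtype _,
    isKappaTree_coherentTree hpow.le hK.le hI he,
    not_isCofinalBranch_coherentTree hK.le hI he hfiber⟩
end
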